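/- Every 2-cocycle of Cend_{1,x} with values in a conformal bimodule M is completely determined by the elements φ_t(x, x), t ≥ 1, and φ₀(x, x^l), l ≥ 1, of M: if φ and φ' are 2-cocycles of Cend_{1,x} with values in M satisfying φ_t(x, x) = φ'_t(x, x) for all t ≥ 1 and φ₀(x, x^l) = φ'₀(x, x^l) for all l ≥ 1, then φ_s(a, b) = φ'_s(a, b) for all a, b ∈ Cend_{1,x} and all s ∈ ℤ₊. -/

import Mathlib

open Finset

/-- An associative conformal algebra over a field `F` of characteristic zero:
a left `F[D]`-module `A` (the action of `D` is recorded by the linear map `D`)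
equipped with `F`-bilinear products `∘ₙ`, `n ∈ ℤ₊`, satisfying locality,
the `D`-rules and the conformal associativity axiom. -/
structure ConfAlg (F : Type*) [Field F] (A : Type*) [AddCommGroup A] [Module F A] where
  D : A →ₗ[F] A
  mul : ℕ → A →ₗ[F] A →ₗ[F] A
  locality : ∀ a b : A, ∃ N : ℕ, ∀ n, N ≤ n → mul n a b = 0
  D_left : ∀ (n : ℕ) (a b : A), mul n (D a) b = -((n : F) • mul (n - 1) a b)
  D_right : ∀ (n : ℕ) (a b : A),
    mul n a (D b) = D (mul n a b) + (n : F) • mul (n - 1) a b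
  assoc : ∀ (n m : ℕ) (a b c : A),
    mul m (mul n a b) c =
      ∑ s ∈ Finset.range (n + 1),
        ((-1 : F) ^ s * (n.choose s : F)) • mul (n - s) a (mul (m + s) b c)

/-- `A`, with conformal structure `CA`, is (a copy of) the conformal algebra
`Cend_{1,x}`: the family `xB k = x^k`, `k ≥ 1`, together with all its
`D`-derivatives `D^i x^k`, is a free generating family (i.e. `{x^k : k ≥ 1}` is a
basis of `A` as a free `F[D]`-module) and the products on the basis are
`x^k ∘ₙ x^l = l(l-1)⋯(l-n+1) x^{k+l-n}` (zero for `n > l`). -/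
def IsCend1x {F : Type*} [Field F] {A : Type*} [AddCommGroup A] [Module F A]
    (CA : ConfAlg F A) (xB : ℕ → A) : Prop :=
  (LinearIndependent F fun p : ℕ × {k : ℕ // 1 ≤ k} => (CA.D ^ p.1) (xB p.2.1)) ∧
  (Submodule.span F (Set.range fun p : ℕ × {k : ℕ // 1 ≤ k} => (CA.D ^ p.1) (xB p.2.1)) = ⊤) ∧
  ∀ (k l n : ℕ), 1 ≤ k → 1 ≤ l →
    CA.mul n (xB k) (xB l) = (l.descFactorial n : F) • xB (k + l - n)

/-- A conformal bimodule `M` over the associative conformal algebra `(A, CA)`. -/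
structure ConfBimod {F : Type*} [Field F] {A : Type*} [AddCommGroup A] [Module F A]
    (CA : ConfAlg F A) (M : Type*) [AddCommGroup M] [Module F M] where
  D : M →ₗ[F] M
  lmul : ℕ → A →ₗ[F] M →ₗ[F] M
  rmul : ℕ → M →ₗ[F] A →ₗ[F] M
  loc_left : ∀ (a : A) (u : M), ∃ N : ℕ, ∀ n, N ≤ n → lmul n a u = 0
  loc_right : ∀ (u : M) (a : A), ∃ N : ℕ, ∀ n, N ≤ n → rmul n u a = 0
  D_la : ∀ (n : ℕ) (a : A) (u : M), lmul n (CA.D a) u = -((n : F) • lmul (n - 1) a u)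
  D_lu : ∀ (n : ℕ) (a : A) (u : M),
    lmul n a (D u) = D (lmul n a u) + (n : F) • lmul (n - 1) a u
  D_ru : ∀ (n : ℕ) (u : M) (a : A), rmul n (D u) a = -((n : F) • rmul (n - 1) u a)
  D_ra : ∀ (n : ℕ) (u : M) (a : A),
    rmul n u (CA.D a) = D (rmul n u a) + (n : F) • rmul (n - 1) u a
  assoc_aau : ∀ (m n : ℕ) (a b : A) (u : M),
    lmul n (CA.mul m a b) u =
      ∑ s ∈ Finset.range (m + 1),
        ((-1 : F) ^ s * (m.choose s : F)) • lmul (m - s) a (lmul (n + s) b u)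
  assoc_uaa : ∀ (m n : ℕ) (u : M) (a b : A),
    rmul n (rmul m u a) b =
      ∑ s ∈ Finset.range (m + 1),
        ((-1 : F) ^ s * (m.choose s : F)) • rmul (m - s) u (CA.mul (n + s) a b)
  assoc_aua : ∀ (m n : ℕ) (a : A) (u : M) (b : A),
    rmul n (lmul m a u) b =
      ∑ s ∈ Finset.range (m + 1),
        ((-1 : F) ^ s * (m.choose s : F)) • lmul (m - s) a (rmul (n + s) u b)

/-- A 2-cochain of a conformal algebra `(A, CA)` with coefficients in the
conformal bimodule `(M, B)`: a family of `F`-bilinear maps `f s : A × A → M`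
satisfying the `D`-rules and locality. -/
structure Cochain2 {F : Type*} [Field F] {A : Type*} [AddCommGroup A] [Module F A]
    {M : Type*} [AddCommGroup M] [Module F M]
    (CA : ConfAlg F A) (B : ConfBimod CA M) where
  f : ℕ → A →ₗ[F] A →ₗ[F] M
  D_left : ∀ (s : ℕ) (a b : A), f s (CA.D a) b = -((s : F) • f (s - 1) a b)
  D_right : ∀ (s : ℕ) (a b : A),
    f s a (CA.D b) = B.D (f s a b) + (s : F) • f (s - 1) a b
  loc : ∀ a b : A, ∃ N : ℕ, ∀ s, N ≤ s → f s a b = 0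

/-- The 2-cocycle condition. -/
def IsCocycle {F : Type*} [Field F] {A : Type*} [AddCommGroup A] [Module F A]
    {M : Type*} [AddCommGroup M] [Module F M]
    {CA : ConfAlg F A} {B : ConfBimod CA M} (φ : Cochain2 CA B) : Prop :=
  ∀ (n m : ℕ) (a b c : A),
    B.lmul n a (φ.f m b c) + φ.f n a (CA.mul m b c) =
      ∑ s ∈ Finset.range (n + 1), (n.choose s : F) •
        (φ.f (m + s) (CA.mul (n - s) a b) c + B.rmul (m + s) (φ.f (n - s) a b) c)

/-- `φ` is a 2-coboundary: `φ = δτ` for some `H`-linear 1-cochain `τ : A → M`. -/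
def IsCoboundary {F : Type*} [Field F] {A : Type*} [AddCommGroup A] [Module F A]
    {M : Type*} [AddCommGroup M] [Module F M]
    {CA : ConfAlg F A} {B : ConfBimod CA M} (φ : Cochain2 CA B) : Prop :=
  ∃ τ : A →ₗ[F] M, (∀ a : A, τ (CA.D a) = B.D (τ a)) ∧
    ∀ (n : ℕ) (a b : A),
      φ.f n a b = B.lmul n a (τ b) - τ (CA.mul n a b) + B.rmul n (τ a) b

/-!
The difference `φ` of the two cocycles is a cocycle with `φ_t(x, x) = 0` and `φ₀(x, x^l) = 0`.
Everything else is forced by the cocycle identity at two places. With `n = 0` it computes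
`φ_m(a ∘₀ b, c)` from `φ_m(b, c)`, `φ₀(a, b)` and `φ₀(a, b ∘_m c)`; with `m = 0` it computes
`φ_n(a, b ∘₀ c)` from `φ₀(b, c)`, `φ(a, b)` and the `φ_s(a ∘_{n-s} b, c)`.
As `x ∘₁ x = x`, `x ∘ₙ x = 0` for `n ≥ 2` and `x ∘₀ x^l = x^{l+1}`, the two together give
`φ_n(x, x^l) = 0` by induction on `l`, passing through `φ_n(x², x^l) = 0`, and the first alone
then gives `φ_n(x^k, x^l) = 0` by induction on `k`. The `D`-rules extend this to all of `A`.
-/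

section

variable {F : Type*} [Field F] {A : Type*} [AddCommGroup A] [Module F A]
  {M : Type*} [AddCommGroup M] [Module F M] {CA : ConfAlg F A} {B : ConfBimod CA M}

namespace Cochain2

/-- The pointwise difference of two cochains; it reduces the comparison of two cocycles to the
vanishing of one. -/
instance : Sub (Cochain2 CA B) where
  sub φ ψ :=
    { f := fun n => φ.f n - ψ.f n
      D_left := fun s a b => by
        simp only [LinearMap.sub_apply, φ.D_left, ψ.D_left, smul_sub]
        abel
      D_right := fun s a b => by
        simp only [LinearMap.sub_apply, φ.D_right, ψ.D_right, smul_sub, map_sub]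
        abel
      loc := fun a b => by
        obtain ⟨N, hN⟩ := φ.loc a b
        obtain ⟨K, hK⟩ := ψ.loc a b
        refine ⟨max N K, fun s hs => ?_⟩
        rw [LinearMap.sub_apply, LinearMap.sub_apply, hN s (le_of_max_le_left hs),
          hK s (le_of_max_le_right hs), sub_zero] }

theorem sub_apply (φ ψ : Cochain2 CA B) (n : ℕ) (a b : A) :
    (φ - ψ).f n a b = φ.f n a b - ψ.f n a b :=
  rfl

theorem apply_D_pow_left_eq_zero (φ : Cochain2 CA B) {a b : A} (h : ∀ n, φ.f n a b = 0)
    (i n : ℕ) : φ.f n ((CA.D ^ i) a) b = 0 := by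
  induction i generalizing n with
  | zero => exact h n
  | succ i ih => rw [pow_succ', Module.End.mul_apply, φ.D_left, ih, smul_zero, neg_zero]

theorem apply_D_pow_right_eq_zero (φ : Cochain2 CA B) {a b : A} (h : ∀ n, φ.f n a b = 0)
    (j n : ℕ) : φ.f n a ((CA.D ^ j) b) = 0 := by
  induction j generalizing n with
  | zero => exact h n
  | succ j ih =>
    rw [pow_succ', Module.End.mul_apply, φ.D_right, ih, ih, map_zero, smul_zero, add_zero]

theorem eq_zero_of_span_D_pow (φ : Cochain2 CA B) {ι : Type*} {v : ι → A}
    (hv : Submodule.span F (Set.range fun p : ℕ × ι => (CA.D ^ p.1) (v p.2)) = ⊤)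
    (h : ∀ n i j, φ.f n (v i) (v j) = 0) (n : ℕ) : φ.f n = 0 := by
  refine LinearMap.ext_on_range hv fun p => LinearMap.ext_on_range hv fun q => ?_
  exact φ.apply_D_pow_left_eq_zero
    (φ.apply_D_pow_right_eq_zero (fun n => h n p.2 q.2) q.1) p.1 n

end Cochain2

namespace IsCocycle

theorem sub {φ ψ : Cochain2 CA B} (hφ : IsCocycle φ) (hψ : IsCocycle ψ) : IsCocycle (φ - ψ) := by
  intro n m a b c
  have hdiff := congrArg₂ (· - ·) (hφ n m a b c) (hψ n m a b c)
  simp only [← Finset.sum_sub_distrib, ← smul_sub, add_sub_add_comm] at hdiff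
  simpa only [Cochain2.sub_apply, map_sub, LinearMap.sub_apply] using hdiff

variable {φ : Cochain2 CA B}

theorem apply_mul_zero_left_eq_zero (hφ : IsCocycle φ) {m : ℕ} {a b c : A}
    (hbc : φ.f m b c = 0) (hab : φ.f 0 a b = 0) (habc : φ.f 0 a (CA.mul m b c) = 0) :
    φ.f m (CA.mul 0 a b) c = 0 := by
  simpa [hbc, hab, habc] using (hφ 0 m a b c).symm

theorem apply_mul_zero_right_eq_zero (hφ : IsCocycle φ) {n : ℕ} {a b c : A}
    (hbc : φ.f 0 b c = 0) (hab : ∀ s ≤ n, φ.f s a b = 0)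
    (habc : ∀ s ≤ n, φ.f s (CA.mul (n - s) a b) c = 0) :
    φ.f n a (CA.mul 0 b c) = 0 := by
  have hcocycle := hφ n 0 a b c
  rw [hbc, map_zero, zero_add] at hcocycle
  rw [hcocycle]
  refine Finset.sum_eq_zero fun s hs => ?_
  rw [zero_add, habc s (Finset.mem_range_succ_iff.mp hs), hab _ (Nat.sub_le n s), map_zero,
    LinearMap.zero_apply, add_zero, smul_zero]

end IsCocycle

/-- The multiplication rule of `Cend_{1,x}` for a sequence `x 1, x 2, …` standing for the powers
`x^k`, `k ≥ 1`; nothing is asked of `x 0`, and the powers are neither required to generate `A`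
nor to be independent over `F[D]`. -/
def IsPowerSystem (CA : ConfAlg F A) (x : ℕ → A) : Prop :=
  ∀ k l n : ℕ, 1 ≤ k → 1 ≤ l →
    CA.mul n (x k) (x l) = (l.descFactorial n : F) • x (k + l - n)

namespace IsPowerSystem

variable {x : ℕ → A} {k l : ℕ}

theorem mul_zero (hx : IsPowerSystem CA x) (hk : 1 ≤ k) (hl : 1 ≤ l) :
    CA.mul 0 (x k) (x l) = x (k + l) := by
  rw [hx k l 0 hk hl, Nat.descFactorial_zero, Nat.cast_one, one_smul, Nat.sub_zero]

theorem mul_eq_zero_of_lt (hx : IsPowerSystem CA x) (hk : 1 ≤ k) (hl : 1 ≤ l) {n : ℕ}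
    (hn : l < n) : CA.mul n (x k) (x l) = 0 := by
  rw [hx k l n hk hl, Nat.descFactorial_of_lt hn, Nat.cast_zero, zero_smul]

theorem mul_one_one (hx : IsPowerSystem CA x) : CA.mul 1 (x 1) (x 1) = x 1 := by
  rw [hx 1 1 1 le_rfl le_rfl, Nat.descFactorial_self, Nat.factorial_one, Nat.cast_one, one_smul]

variable {φ : Cochain2 CA B}

theorem apply_mul_eq_zero (hx : IsPowerSystem CA x) {s : ℕ} {a : A}
    (h : ∀ l, 1 ≤ l → φ.f s a (x l) = 0) (hk : 1 ≤ k) (hl : 1 ≤ l) (n : ℕ) :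
    φ.f s a (CA.mul n (x k) (x l)) = 0 := by
  rcases le_or_gt n l with hn | hn
  · rw [hx k l n hk hl, map_smul, h _ (by omega), smul_zero]
  · rw [hx.mul_eq_zero_of_lt hk hl hn, map_zero]

theorem apply_one_eq_zero (hx : IsPowerSystem CA x) (hφ : IsCocycle φ)
    (h1 : ∀ t, 1 ≤ t → φ.f t (x 1) (x 1) = 0) (h0 : ∀ l, 1 ≤ l → φ.f 0 (x 1) (x l) = 0)
    (hl : 1 ≤ l) (n : ℕ) : φ.f n (x 1) (x l) = 0 := by
  have hbase (t : ℕ) : φ.f t (x 1) (x 1) = 0 := by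
    rcases t.eq_zero_or_pos with rfl | ht
    exacts [h0 1 le_rfl, h1 t ht]
  induction l, hl using Nat.le_induction generalizing n with
  | base => exact hbase n
  | succ l hl ih =>
    have hmul (s : ℕ) : ∀ m, φ.f s (CA.mul m (x 1) (x 1)) (x l) = 0
      | 0 => hφ.apply_mul_zero_left_eq_zero (ih s) (h0 1 le_rfl)
          (hx.apply_mul_eq_zero h0 le_rfl hl s)
      | 1 => by rw [hx.mul_one_one, ih]
      | m + 2 => by
        rw [hx.mul_eq_zero_of_lt le_rfl le_rfl (by omega), map_zero, LinearMap.zero_apply]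
    rw [add_comm l, ← hx.mul_zero le_rfl hl]
    exact hφ.apply_mul_zero_right_eq_zero (h0 l hl) (fun s _ => hbase s) fun s _ => hmul s _

theorem apply_eq_zero (hx : IsPowerSystem CA x) (hφ : IsCocycle φ)
    (h1 : ∀ t, 1 ≤ t → φ.f t (x 1) (x 1) = 0) (h0 : ∀ l, 1 ≤ l → φ.f 0 (x 1) (x l) = 0)
    (hk : 1 ≤ k) (hl : 1 ≤ l) (n : ℕ) : φ.f n (x k) (x l) = 0 := by
  induction k, hk using Nat.le_induction with
  | base => exact hx.apply_one_eq_zero hφ h1 h0 hl n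
  | succ k hk ih =>
    rw [add_comm k, ← hx.mul_zero le_rfl hk]
    exact hφ.apply_mul_zero_left_eq_zero ih (h0 k hk) (hx.apply_mul_eq_zero h0 hk hl n)

end IsPowerSystem

theorem cocycle_determined_by_values_general {x : ℕ → A} (hx : IsPowerSystem CA x)
    (hspan : Submodule.span F
      (Set.range fun p : ℕ × {k : ℕ // 1 ≤ k} => (CA.D ^ p.1) (x p.2.1)) = ⊤)
    {φ ψ : Cochain2 CA B} (hφ : IsCocycle φ) (hψ : IsCocycle ψ)
    (h1 : ∀ t : ℕ, 1 ≤ t → φ.f t (x 1) (x 1) = ψ.f t (x 1) (x 1))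
    (h0 : ∀ l : ℕ, 1 ≤ l → φ.f 0 (x 1) (x l) = ψ.f 0 (x 1) (x l))
    (s : ℕ) (a b : A) : φ.f s a b = ψ.f s a b := by
  have hpowers (n : ℕ) (k l : {k : ℕ // 1 ≤ k}) : (φ - ψ).f n (x k) (x l) = 0 :=
    hx.apply_eq_zero (hφ.sub hψ) (fun t ht => sub_eq_zero.mpr (h1 t ht))
      (fun l hl => sub_eq_zero.mpr (h0 l hl)) k.2 l.2 n
  have hzero : (φ - ψ).f s = 0 :=
    (φ - ψ).eq_zero_of_span_D_pow (v := fun k : {k : ℕ // 1 ≤ k} => x k) hspan hpowers s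
  rw [← sub_eq_zero, ← Cochain2.sub_apply, hzero, LinearMap.zero_apply, LinearMap.zero_apply]

end

/-- **Lemma 1.** A 2-cocycle of `Cend_{1,x}` with values in a conformal bimodule `M`
is completely determined by the elements `φ_t(x, x)`, `t ≥ 1`, and `φ₀(x, x^l)`,
`l ≥ 1`: two 2-cocycles agreeing on these values agree everywhere. -/
theorem cocycle_determined_by_values {F : Type*} [Field F] [CharZero F]
    {A : Type*} [AddCommGroup A] [Module F A]
    {M : Type*} [AddCommGroup M] [Module F M]
    (CA : ConfAlg F A) (xB : ℕ → A) (hX : IsCend1x CA xB)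
    (B : ConfBimod CA M) (φ φ' : Cochain2 CA B)
    (hφ : IsCocycle φ) (hφ' : IsCocycle φ')
    (h1 : ∀ t : ℕ, 1 ≤ t → φ.f t (xB 1) (xB 1) = φ'.f t (xB 1) (xB 1))
    (h2 : ∀ l : ℕ, 1 ≤ l → φ.f 0 (xB 1) (xB l) = φ'.f 0 (xB 1) (xB l)) :
    ∀ (s : ℕ) (a b : A), φ.f s a b = φ'.f s a b :=
  cocycle_determined_by_values_general hX.2.2 hX.2.1 hφ hφ' h1 h2
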